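/- Let K be a centrally symmetric convex body in ℝⁿ. Then ℤⁿ is *critical for K (i.e., ℤⁿ + K is non-separable and d(ℤⁿ) = Δ*(K)) if and only if ℤⁿ is critical for (1/2)K° (i.e., ℤⁿ is (1/2)K°-admissible and d(ℤⁿ) = Δ((1/2)K°)). -/

import Mathlib

open MeasureTheory Set Matrix Pointwise

noncomputable section

/-- The lattice `A · ℤⁿ` associated with an (invertible) matrix `A`. -/
def latticeOf {n : ℕ} (A : Matrix (Fin n) (Fin n) ℝ) : Set (Fin n → ℝ) :=
  Set.range fun m : Fin n → ℤ => A.mulVec fun i => (m i : ℝ)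

/-- `Λ + K` is non-separable: every affine hyperplane `{y | ⟨u,y⟩ = c}` (with `u ≠ 0`)
meets `x + K` for some `x ∈ Λ`. -/
def NonSeparable {n : ℕ} (Λ K : Set (Fin n → ℝ)) : Prop :=
  ∀ u : Fin n → ℝ, u ≠ 0 → ∀ c : ℝ, ∃ x ∈ Λ, ∃ y ∈ K, u ⬝ᵥ (x + y) = c

/-- `d_{n,n-1}(K)`: the smallest density `|K|/d(Λ)` of a non-separable
lattice of translates of `K`. -/
def dTrans {n : ℕ} (K : Set (Fin n → ℝ)) : ℝ :=
  sInf {d : ℝ | ∃ A : Matrix (Fin n) (Fin n) ℝ, A.det ≠ 0 ∧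
    NonSeparable (latticeOf A) K ∧ d = (volume K).toReal / |A.det|}

/-- The polar body `K° = {x | ∀ y ∈ K, ⟨y,x⟩ ≤ 1}`. -/
def polarBody {n : ℕ} (K : Set (Fin n → ℝ)) : Set (Fin n → ℝ) :=
  {x | ∀ y ∈ K, y ⬝ᵥ x ≤ 1}

/-- A set `Λ` is `K`-admissible if it meets the interior of `K` only in `0`. -/
def Admissible {n : ℕ} (Λ K : Set (Fin n → ℝ)) : Prop :=
  Λ ∩ interior K = {0}

/-- The critical determinant `Δ(K)`: the smallest determinant of a `K`-admissible lattice. -/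
def critDet {n : ℕ} (K : Set (Fin n → ℝ)) : ℝ :=
  sInf {d : ℝ | ∃ A : Matrix (Fin n) (Fin n) ℝ, A.det ≠ 0 ∧
    Admissible (latticeOf A) K ∧ d = |A.det|}

/-- The densest lattice packing density `δ_L(K) = |K| / (2ⁿ Δ(K))` of a
centrally symmetric convex body `K ⊆ ℝⁿ`. -/
def deltaL {n : ℕ} (K : Set (Fin n → ℝ)) : ℝ :=
  (volume K).toReal / (2 ^ n * critDet K)

/-- The integer lattice `ℤⁿ ⊆ ℝⁿ`. -/
def intLattice (n : ℕ) : Set (Fin n → ℝ) :=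
  Set.range fun m : Fin n → ℤ => fun i => (m i : ℝ)

/-- The *critical determinant `Δ*(K)`: the largest determinant of a lattice `Λ`
with `Λ + K` non-separable. -/
def starCritDet {n : ℕ} (K : Set (Fin n → ℝ)) : ℝ :=
  sSup {d : ℝ | ∃ A : Matrix (Fin n) (Fin n) ℝ, A.det ≠ 0 ∧
    NonSeparable (latticeOf A) K ∧ d = |A.det|}

theorem aux_mem_interior {n : ℕ} (K : Set (Fin n → ℝ)) (hKc : IsCompact K)
    (v : Fin n → ℝ) :
    v ∈ interior ((2⁻¹ : ℝ) • polarBody K) ↔ ∀ y ∈ K, y ⬝ᵥ v < 1 / 2 := by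
  have hmem : ∀ w : Fin n → ℝ, w ∈ (2⁻¹ : ℝ) • polarBody K ↔ ∀ y ∈ K, y ⬝ᵥ w ≤ 1 / 2 := by
    intro w
    rw [Set.mem_smul_set_iff_inv_smul_mem₀ (by norm_num)]
    simp only [polarBody, Set.mem_ofPred_eq, dotProduct_smul, smul_eq_mul, inv_inv]
    refine forall₂_congr fun y _ => ?_
    constructor <;> intro h <;> linarith
  constructor
  · intro hv y hy
    by_contra hlt
    push Not at hlt
    have hc : ContinuousAt (fun t : ℝ => t • v) 1 := by fun_prop
    have hnhds : ((2⁻¹ : ℝ) • polarBody K) ∈ nhds ((1 : ℝ) • v) := by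
      rw [one_smul]; exact mem_interior_iff_mem_nhds.1 hv
    have hev := hc.eventually hnhds
    obtain ⟨ε, hε, hball⟩ := Metric.eventually_nhds_iff.1 hev
    have h1 := hball (y := 1 + ε / 2) (by
      rw [Real.dist_eq]; rw [abs_lt]; constructor <;> linarith)
    have h2 := (hmem _).1 h1 y hy
    rw [dotProduct_smul, smul_eq_mul] at h2
    nlinarith
  · intro hv
    rw [mem_interior]
    refine ⟨{w | ∀ y ∈ K, y ⬝ᵥ w < 1 / 2}, ?_, ?_, hv⟩
    · intro w hw
      exact (hmem w).2 fun y hy => (hw y hy).le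
    · rw [isOpen_iff_mem_nhds]
      intro w hw
      have := hKc.eventually_forall_of_forall_eventually (x₀ := w)
        (P := fun w y => y ⬝ᵥ w < 1 / 2) ?_
      · exact this
      · intro y hy
        have hc : Continuous (fun z : (Fin n → ℝ) × (Fin n → ℝ) => z.2 ⬝ᵥ z.1) := by
          simp only [dotProduct]; fun_prop
        exact hc.continuousAt.eventually_lt continuousAt_const (hw y hy)

theorem aux_admissible {n : ℕ} (K : Set (Fin n → ℝ)) (hKc : IsCompact K)
    (B : Matrix (Fin n) (Fin n) ℝ) :
    Admissible (latticeOf B) ((2⁻¹ : ℝ) • polarBody K) ↔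
      ∀ m : Fin n → ℤ, (B *ᵥ fun i => (m i : ℝ)) ≠ 0 →
        ∃ y ∈ K, 1 / 2 ≤ y ⬝ᵥ (B *ᵥ fun i => (m i : ℝ)) := by
  unfold Admissible
  constructor
  · intro h m hm
    by_contra hcon
    push Not at hcon
    have : (B *ᵥ fun i => (m i : ℝ)) ∈
        latticeOf B ∩ interior ((2⁻¹ : ℝ) • polarBody K) :=
      ⟨⟨m, rfl⟩, (aux_mem_interior K hKc _).2 hcon⟩
    rw [h] at this
    exact hm this
  · intro h
    ext v
    constructor
    · rintro ⟨⟨m, rfl⟩, hv⟩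
      by_contra hne
      obtain ⟨y, hy, hle⟩ := h m hne
      have := (aux_mem_interior K hKc _).1 hv y hy
      exact absurd this (not_lt.2 hle)
    · rintro rfl
      refine ⟨⟨0, ?_⟩, (aux_mem_interior K hKc _).2 fun y _ => by simp⟩
      simp only [Pi.zero_apply, Int.cast_zero]
      exact Matrix.mulVec_zero B

theorem aux_hit {n : ℕ} (K : Set (Fin n → ℝ)) (hKconv : Convex ℝ K)
    (hsymm : K = -K) (u y : Fin n → ℝ) (hy : y ∈ K) (r : ℝ) (hr : |r| ≤ |u ⬝ᵥ y|) :
    ∃ z ∈ K, u ⬝ᵥ z = r := by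
  have hny : -y ∈ K := by rw [hsymm]; simpa using hy
  by_cases h0 : u ⬝ᵥ y = 0
  · refine ⟨y, hy, ?_⟩
    rw [h0, abs_zero] at hr
    rw [h0]; exact (abs_nonpos_iff.1 hr).symm
  · have ht : |r / (u ⬝ᵥ y)| ≤ 1 := by
      rw [abs_div]; exact div_le_one_of_le₀ hr (abs_nonneg _)
    obtain ⟨h1, h2⟩ := abs_le.1 ht
    set t := r / (u ⬝ᵥ y) with htdef
    refine ⟨((1 + t) / 2) • y + ((1 - t) / 2) • (-y),
      hKconv hy hny (by linarith) (by linarith) (by ring), ?_⟩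
    have : t * (u ⬝ᵥ y) = r := div_mul_cancel₀ _ h0
    rw [dotProduct_add, dotProduct_smul, dotProduct_smul, dotProduct_neg]
    simp only [smul_eq_mul]
    linarith

theorem aux_pos {n : ℕ} (K : Set (Fin n → ℝ)) (hKint : (interior K).Nonempty)
    (u : Fin n → ℝ) (hu : u ≠ 0) : ∃ y ∈ K, u ⬝ᵥ y ≠ 0 := by
  obtain ⟨x, hx⟩ := hKint
  by_cases h0 : u ⬝ᵥ x = 0
  · have hc : ContinuousAt (fun t : ℝ => x + t • u) 0 := by fun_prop
    have hnhds : K ∈ nhds (x + (0 : ℝ) • u) := by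
      rw [zero_smul, add_zero]; exact mem_interior_iff_mem_nhds.1 hx
    obtain ⟨ε, hε, hball⟩ := Metric.eventually_nhds_iff.1 (hc.eventually hnhds)
    refine ⟨_, hball (y := ε / 2) (by
      rw [Real.dist_eq, sub_zero, abs_of_pos] <;> linarith), ?_⟩
    rw [dotProduct_add, h0, zero_add, dotProduct_smul, smul_eq_mul]
    exact mul_ne_zero (by linarith) (fun h => hu (dotProduct_self_eq_zero.1 h))
  · exact ⟨x, interior_subset hx, h0⟩

theorem aux_key {n : ℕ} (K : Set (Fin n → ℝ))
    (hKc : IsCompact K) (hKconv : Convex ℝ K) (hKint : (interior K).Nonempty)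
    (hsymm : K = -K) (A : Matrix (Fin n) (Fin n) ℝ) (hA : A.det ≠ 0) :
    NonSeparable (latticeOf A) K ↔
      Admissible (latticeOf (A⁻¹)ᵀ) ((2⁻¹ : ℝ) • polarBody K) := by
  have hU : IsUnit A.det := isUnit_iff_ne_zero.2 hA
  rw [aux_admissible K hKc]
  constructor
  · intro hns m hm
    obtain ⟨x, ⟨k, rfl⟩, y, hy, hxy⟩ := hns _ hm (1 / 2)
    set v := (A⁻¹)ᵀ *ᵥ fun i => (m i : ℝ) with hv
    have hint : v ⬝ᵥ (A *ᵥ fun i => (k i : ℝ)) = ((∑ i, m i * k i : ℤ) : ℝ) := by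
      rw [dotProduct_mulVec, hv, Matrix.mulVec_transpose, Matrix.vecMul_vecMul,
        Matrix.nonsing_inv_mul _ hU, Matrix.vecMul_one]
      simp [dotProduct]
    rw [dotProduct_add, hint] at hxy
    have hny : -y ∈ K := by rw [hsymm]; simpa using hy
    rcases le_or_gt (∑ i, m i * k i) 0 with hj | hj
    · refine ⟨y, hy, ?_⟩
      have : ((∑ i, m i * k i : ℤ) : ℝ) ≤ 0 := by exact_mod_cast hj
      rw [dotProduct_comm]; linarith
    · refine ⟨-y, hny, ?_⟩
      have : (1 : ℝ) ≤ ((∑ i, m i * k i : ℤ) : ℝ) := by exact_mod_cast hj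
      rw [neg_dotProduct, dotProduct_comm]; linarith
  · intro hadm u hu c
    set w := u ᵥ* A with hw
    let f : (Fin n → ℤ) →+ ℝ :=
      { toFun := fun k => w ⬝ᵥ fun i => (k i : ℝ)
        map_zero' := by simp [dotProduct]
        map_add' := by intro a b; simp [dotProduct, mul_add, Finset.sum_add_distrib] }
    have hf : ∀ k, f k = u ⬝ᵥ (A *ᵥ fun i => (k i : ℝ)) := by
      intro k; rw [dotProduct_mulVec]; rfl
    -- it suffices to find a lattice point close to `c`
    have close : ∀ y ∈ K, ∀ k, |c - f k| ≤ |u ⬝ᵥ y| →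
        ∃ x ∈ latticeOf A, ∃ y ∈ K, u ⬝ᵥ (x + y) = c := by
      intro y hy k hk
      obtain ⟨z, hz, hzr⟩ := aux_hit K hKconv hsymm u y hy _ hk
      refine ⟨_, ⟨k, rfl⟩, z, hz, ?_⟩
      rw [dotProduct_add, hzr, hf]; ring
    rcases AddSubgroup.dense_or_cyclic f.range with hd | ⟨a, ha⟩
    · obtain ⟨y, hy, hne⟩ := aux_pos K hKint u hu
      obtain ⟨g, ⟨k, rfl⟩, hg⟩ := hd.exists_dist_lt c (abs_pos.2 hne)
      exact close y hy k (by rw [← Real.dist_eq]; exact hg.le)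
    · have hmul : ∀ k, ∃ j : ℤ, (j : ℝ) * a = f k := by
        intro k
        have : f k ∈ f.range := ⟨k, rfl⟩
        rw [ha, AddSubgroup.mem_closure_singleton] at this
        obtain ⟨j, hj⟩ := this
        exact ⟨j, by rw [← hj, zsmul_eq_mul]⟩
      choose j hj using fun i : Fin n => hmul (Pi.single i 1)
      have hwi : w = a • fun i => (j i : ℝ) := by
        ext i
        have h1 : f (Pi.single i 1) = w i := by
          show (w ⬝ᵥ fun l => ((Pi.single i 1 : Fin n → ℤ) l : ℝ)) = w i
          simp [dotProduct, Pi.single_apply]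
        rw [← h1, ← hj i]; simp [mul_comm]
      have hua : u = a • ((A⁻¹)ᵀ *ᵥ fun i => (j i : ℝ)) := by
        rw [← Matrix.mulVec_smul, ← hwi, Matrix.mulVec_transpose, hw, Matrix.vecMul_vecMul,
          Matrix.mul_nonsing_inv _ hU, Matrix.vecMul_one]
      have ha0 : a ≠ 0 := by
        rintro rfl
        exact hu (by rw [hua, zero_smul])
      have hv0 : ((A⁻¹)ᵀ *ᵥ fun i => (j i : ℝ)) ≠ 0 := by
        intro h
        exact hu (by rw [hua, h, smul_zero])
      obtain ⟨y, hy, hle⟩ := hadm j hv0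
      have hmem : (round (c / a) : ℝ) * a ∈ f.range := by
        rw [ha, AddSubgroup.mem_closure_singleton]
        exact ⟨round (c / a), by rw [zsmul_eq_mul]⟩
      obtain ⟨k, hk⟩ := hmem
      refine close y hy k ?_
      rw [hk]
      have h1 : c - round (c / a) * a = (c / a - round (c / a)) * a := by
        rw [sub_mul, div_mul_cancel₀ _ ha0]
      rw [h1, abs_mul, hua, smul_dotProduct, smul_eq_mul, abs_mul, mul_comm,
        dotProduct_comm]
      refine mul_le_mul_of_nonneg_left ?_ (abs_nonneg _)
      exact (abs_sub_round _).trans (hle.trans (le_abs_self _))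

theorem aux_int (n : ℕ) : intLattice n = latticeOf (1 : Matrix (Fin n) (Fin n) ℝ) := by
  simp [intLattice, latticeOf]

/-- For a centrally symmetric convex body `K ⊆ ℝⁿ` (noting `d(ℤⁿ) = 1`):
`ℤⁿ` is *critical for `K` iff `ℤⁿ` is critical for `(1/2)K°`. -/
theorem int_starCritical_iff_critical_half_polar {n : ℕ} (K : Set (Fin n → ℝ))
    (hKc : IsCompact K) (hKconv : Convex ℝ K) (hKint : (interior K).Nonempty)
    (hsymm : K = -K) :
    (NonSeparable (intLattice n) K ∧ (1 : ℝ) = starCritDet K) ↔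
      (Admissible (intLattice n) ((2⁻¹ : ℝ) • polarBody K) ∧
        (1 : ℝ) = critDet ((2⁻¹ : ℝ) • polarBody K)) := by
  have key := aux_key K hKc hKconv hKint hsymm
  have hone : NonSeparable (intLattice n) K ↔
      Admissible (intLattice n) ((2⁻¹ : ℝ) • polarBody K) := by
    have := key 1 (by simp)
    rw [inv_one, Matrix.transpose_one] at this
    rw [aux_int]; exact this
  have hdet : ∀ A : Matrix (Fin n) (Fin n) ℝ, |((A⁻¹)ᵀ).det| = |A.det|⁻¹ := by
    intro A
    rw [Matrix.det_transpose, Matrix.det_nonsing_inv, Ring.inverse_eq_inv', abs_inv]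
  have hdet0 : ∀ A : Matrix (Fin n) (Fin n) ℝ, A.det ≠ 0 → ((A⁻¹)ᵀ).det ≠ 0 := by
    intro A hA
    rw [← abs_pos, hdet]
    exact inv_pos.2 (abs_pos.2 hA)
  have key' : ∀ B : Matrix (Fin n) (Fin n) ℝ, B.det ≠ 0 →
      (Admissible (latticeOf B) ((2⁻¹ : ℝ) • polarBody K) ↔
        NonSeparable (latticeOf (B⁻¹)ᵀ) K) := by
    intro B hB
    rw [key _ (hdet0 B hB), ← Matrix.transpose_nonsing_inv, Matrix.transpose_transpose,
      Matrix.nonsing_inv_nonsing_inv _ (isUnit_iff_ne_zero.2 hB)]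
  constructor
  · rintro ⟨hns, hsup⟩
    have hadm := hone.1 hns
    refine ⟨hadm, ?_⟩
    have hbdd : BddAbove {d : ℝ | ∃ A : Matrix (Fin n) (Fin n) ℝ, A.det ≠ 0 ∧
        NonSeparable (latticeOf A) K ∧ d = |A.det|} := by
      by_contra hb
      rw [starCritDet, Real.sSup_of_not_bddAbove hb] at hsup
      exact one_ne_zero hsup
    symm
    unfold critDet
    refine IsLeast.csInf_eq ⟨⟨1, by simp, by rwa [← aux_int], by simp⟩, ?_⟩
    rintro d ⟨B, hB, hBa, rfl⟩
    have h1 : |((B⁻¹)ᵀ).det| ≤ 1 := by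
      rw [hsup]
      exact le_csSup hbdd ⟨_, hdet0 B hB, (key' B hB).1 hBa, rfl⟩
    rw [hdet] at h1
    exact (inv_le_one₀ (abs_pos.2 hB)).1 h1
  · rintro ⟨hadm, hinf⟩
    have hns := hone.2 hadm
    refine ⟨hns, ?_⟩
    have hbdd : BddBelow {d : ℝ | ∃ A : Matrix (Fin n) (Fin n) ℝ, A.det ≠ 0 ∧
        Admissible (latticeOf A) ((2⁻¹ : ℝ) • polarBody K) ∧ d = |A.det|} := by
      refine ⟨0, ?_⟩
      rintro d ⟨B, _, _, rfl⟩
      exact abs_nonneg _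
    symm
    unfold starCritDet
    refine IsGreatest.csSup_eq ⟨⟨1, by simp, by rwa [← aux_int], by simp⟩, ?_⟩
    rintro d ⟨A, hA, hAn, rfl⟩
    have h1 : 1 ≤ |((A⁻¹)ᵀ).det| := by
      rw [hinf]
      exact csInf_le hbdd ⟨_, hdet0 A hA, (key A hA).1 hAn, rfl⟩
    rw [hdet] at h1
    exact (one_le_inv₀ (abs_pos.2 hA)).1 h1
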